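/- Let N = {n_1,…,n_s; n} be a scheme for distinct nodes X = {A_1,…,A_s} ⊂ ℝ². If the Hermite interpolation problem (N,X) is n-solvable, then for every nonzero bivariate real polynomial f of degree k with 1 ≤ k ≤ n, the sum of the multiplicities n_i over the nodes A_i with f(A_i) = 0 is at most d(n,k) := k(2n+3−k)/2. -/

import Mathlib

/-!
Taylor expansion at a node turns the interpolation conditions of order `m` into the vanishing of
all coefficients of degree less than `m`. If `f ≠ 0` has degree `k ≤ n` and vanishes at the nodes
`A i`, then multiplication by `f` sends the polynomials of degree at most `n - k` vanishing to order
`m i - 1` at each `A i` injectively to those of degree at most `n` vanishing to order `m i`.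
Solvability says that the conditions of order `m i` are independent on the latter space, whereas
the codimension of the former is at most its number of conditions. Comparing dimensions, the
conditions gained at the nodes on passing from `m i - 1` to `m i`, which number `m i` at each node
in the plane, are at most `dim Π_n - dim Π_{n-k} = k (2n + 3 - k) / 2`.
-/

open MvPolynomial

/-- `Dij i j p` is the partial derivative `D^{ij} p = ∂^{i+j} p / ∂x^i ∂y^j`. -/
noncomputable def Dij (i j : ℕ) (p : MvPolynomial (Fin 2) ℝ) : MvPolynomial (Fin 2) ℝ :=
  (fun q => pderiv (0 : Fin 2) q)^[i] ((fun q => pderiv (1 : Fin 2) q)^[j] p)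

/-- The Hermite interpolation problem with multiplicities `nk` on the nodes `A` is
`n`-solvable: every data admits an interpolant in `Π_n`. -/
def HermiteSolvable (n s : ℕ) (nk : Fin s → ℕ) (A : Fin s → Fin 2 → ℝ) : Prop :=
  ∀ c : Fin s → ℕ → ℕ → ℝ,
    ∃ p : MvPolynomial (Fin 2) ℝ, p.totalDegree ≤ n ∧
      ∀ (k : Fin s) (i j : ℕ), i + j + 1 ≤ nk k → eval (A k) (Dij i j p) = c k i j

section LinearAlgebra

open Module

theorem finrank_add_finrank_le_of_map_ker_le {K V V' W W' : Type*} [DivisionRing K]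
    [AddCommGroup V] [Module K V] [FiniteDimensional K V] [AddCommGroup V'] [Module K V']
    [FiniteDimensional K V'] [AddCommGroup W] [Module K W] [AddCommGroup W'] [Module K W']
    [FiniteDimensional K W'] {L : V →ₗ[K] W} {L' : V' →ₗ[K] W'} {M : V' →ₗ[K] V}
    (hL : Function.Surjective L) (hM : Function.Injective M)
    (hker : (LinearMap.ker L').map M ≤ LinearMap.ker L) :
    finrank K V' + finrank K W ≤ finrank K V + finrank K W' := by
  have rank_nullity := L.finrank_range_add_finrank_ker
  rw [LinearMap.range_eq_top.2 hL, finrank_top] at rank_nullity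
  have rank_nullity' := L'.finrank_range_add_finrank_ker
  have range_le : finrank K (LinearMap.range L') ≤ finrank K W' := Submodule.finrank_le _
  have ker_le : finrank K (LinearMap.ker L') ≤ finrank K (LinearMap.ker L) :=
    ((LinearMap.ker L').equivMapOfInjective M hM).finrank_eq.trans_le (Submodule.finrank_mono hker)
  lia

end LinearAlgebra

section Monomials

variable (σ : Type*) [Fintype σ]

open Classical in
/-- The exponents of the monomials in the variables `σ` of total degree less than `m`. -/
noncomputable def monomialsLT (m : ℕ) : Finset (σ →₀ ℕ) :=
  (Finset.range m).biUnion (Finset.finsuppAntidiag Finset.univ)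

variable {σ}

theorem mem_monomialsLT {m : ℕ} {α : σ →₀ ℕ} : α ∈ monomialsLT σ m ↔ α.degree < m := by
  simp [monomialsLT, Finsupp.degree_eq_sum]

variable (σ)

theorem card_monomialsLT (m : ℕ) :
    (monomialsLT σ m).card = ∑ d ∈ Finset.range m, (Fintype.card σ).multichoose d := by
  classical
  rw [monomialsLT, Finset.card_biUnion]
  · simp only [Finset.card_finsuppAntidiag_nat_eq_multichoose, Finset.card_univ]
  · intro d _ e _ hde
    refine Finset.disjoint_left.2 fun α hα hα' => hde ?_
    exact (Finset.mem_finsuppAntidiag.1 hα).1.symm.trans (Finset.mem_finsuppAntidiag.1 hα').1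

theorem card_monomialsLT_succ (m : ℕ) :
    (monomialsLT σ (m + 1)).card = (monomialsLT σ m).card + (Fintype.card σ).multichoose m := by
  simp only [card_monomialsLT, Finset.sum_range_succ]

theorem finrank_restrictTotalDegree (R : Type*) [CommSemiring R] [Nontrivial R] (n : ℕ) :
    Module.finrank R (restrictTotalDegree σ R n) =
      (n + Fintype.card σ).choose (Fintype.card σ) := by
  have index_eq : {α : σ →₀ ℕ | (α.sum fun _ e => e) ≤ n} = monomialsLT σ (n + 1) := by
    ext α
    simp [mem_monomialsLT, Finsupp.degree_apply, Finsupp.sum]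
  rw [restrictTotalDegree, Module.finrank_eq_nat_card_basis (basisRestrictSupport R _), index_eq,
    Nat.card_coe_set_eq, Set.ncard_coe_finset, card_monomialsLT, Nat.sum_range_multichoose]

end Monomials

section Taylor

variable {σ R ι κ : Type*} [CommSemiring R]

/-- The Taylor expansion of `p` at `a`, as the polynomial `p (X + a)` in the displacement from `a`.
Its coefficients are the Hasse derivatives of `p` at `a`. -/
noncomputable def mvTaylor (a : σ → R) : MvPolynomial σ R →ₐ[R] MvPolynomial σ R :=
  aeval fun i => X i + C (a i)

theorem mvTaylor_X (a : σ → R) (i : σ) : mvTaylor a (X i) = X i + C (a i) :=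
  aeval_X _ _

theorem coeff_zero_mvTaylor (a : σ → R) (p : MvPolynomial σ R) :
    coeff 0 (mvTaylor a p) = eval a p := by
  have h : (constantCoeff (σ := σ) (R := R)).comp (mvTaylor a : _ →+* _) = eval a := by
    ext <;> simp [mvTaylor]
  exact congrArg (· p) h

theorem mvTaylor_pderiv (a : σ → R) (i : σ) (p : MvPolynomial σ R) :
    mvTaylor a (pderiv i p) = pderiv i (mvTaylor a p) := by
  classical
  induction p using MvPolynomial.induction_on with
  | C r => simp [mvTaylor]
  | add p q hp hq => simp only [map_add, hp, hq]
  | mul_X p j hp =>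
    have pderiv_shift : pderiv i (X j + C (a j)) =
        (Pi.single i 1 : σ → MvPolynomial σ R) j := by simp [pderiv_X]
    simp only [pderiv_mul, map_add, map_mul, hp, mvTaylor_X, pderiv_shift, pderiv_X]
    by_cases h : j = i <;> simp [h]

theorem mvTaylor_iterate_pderiv (a : σ → R) (i : σ) (r : ℕ) (p : MvPolynomial σ R) :
    mvTaylor a ((pderiv i)^[r] p) = (pderiv i)^[r] (mvTaylor a p) :=
  (Function.Semiconj.iterate_right (mvTaylor_pderiv a i) r).eq p

theorem coeff_iterate_pderiv (i : σ) (r : ℕ) (p : MvPolynomial σ R) (α : σ →₀ ℕ) :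
    coeff α ((pderiv i)^[r] p) =
      coeff (α + Finsupp.single i r) p * ((α i + 1).ascFactorial r : R) := by
  induction r generalizing p with
  | zero => simp
  | succ r ih =>
    rw [Function.iterate_succ_apply, ih, coeff_pderiv, add_assoc, ← Finsupp.single_add,
      Nat.ascFactorial_succ]
    simp only [Finsupp.single_add, Finsupp.coe_add, Pi.add_apply, Finsupp.single_eq_same,
      Nat.cast_add, Nat.cast_mul, Nat.cast_one]
    ring

/-- The order of vanishing of `p` at `a`, equal to `⊤` when `p = 0`. -/
noncomputable def vanishingOrder (a : σ → R) (p : MvPolynomial σ R) : ℕ∞ :=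
  (mvTaylor a p : MvPowerSeries σ R).order

theorem le_vanishingOrder_iff {a : σ → R} {p : MvPolynomial σ R} {m : ℕ} :
    m ≤ vanishingOrder a p ↔ ∀ α : σ →₀ ℕ, α.degree < m → coeff α (mvTaylor a p) = 0 := by
  refine ⟨fun h α hα => ?_, fun h => MvPowerSeries.nat_le_order fun α hα => ?_⟩
  · rw [← coeff_coe]
    exact MvPowerSeries.coeff_of_lt_order ((Nat.cast_lt.2 hα).trans_le h)
  · rw [coeff_coe, h α hα]

theorem one_le_vanishingOrder_iff {a : σ → R} {p : MvPolynomial σ R} :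
    1 ≤ vanishingOrder a p ↔ eval a p = 0 := by
  rw [vanishingOrder, MvPowerSeries.one_le_order_iff_constCoeff_eq_zero, ← coeff_zero_mvTaylor,
    ← MvPowerSeries.coeff_zero_eq_constantCoeff_apply, coeff_coe]

theorem add_vanishingOrder_le_vanishingOrder_mul (a : σ → R) (p q : MvPolynomial σ R) :
    vanishingOrder a p + vanishingOrder a q ≤ vanishingOrder a (p * q) := by
  rw [vanishingOrder, vanishingOrder, vanishingOrder, map_mul, coe_mul]
  exact MvPowerSeries.le_order_mul

/-- Solvability in degree at most `n` of the Hermite interpolation problem with multiplicities `m`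
on the nodes `A`, with Taylor coefficients as data. These determine, and are determined by, the
partial derivatives when factorials are invertible, but are the right data in any characteristic. -/
def TaylorSolvable (n : ℕ) (m : ι → ℕ) (A : ι → σ → R) : Prop :=
  ∀ c : ι → (σ →₀ ℕ) → R, ∃ p : MvPolynomial σ R, p.totalDegree ≤ n ∧
    ∀ i α, α.degree < m i → coeff α (mvTaylor (A i) p) = c i α

theorem TaylorSolvable.comp_injective {n : ℕ} {m : ι → ℕ} {A : ι → σ → R}
    (h : TaylorSolvable n m A) {e : κ → ι} (he : Function.Injective e) :
    TaylorSolvable n (m ∘ e) (A ∘ e) := fun c => by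
  obtain ⟨p, hp, hpc⟩ := h (Function.extend e c 0)
  exact ⟨p, hp, fun i α hα => by simpa [he.extend_apply] using hpc (e i) α hα⟩

end Taylor

section Jets

variable {σ R ι : Type*} [Fintype σ] [CommSemiring R]

/-- The Taylor coefficients of a polynomial at each node `A i`, in the degrees less than `m i`. -/
noncomputable def taylorJet (m : ι → ℕ) (A : ι → σ → R) :
    MvPolynomial σ R →ₗ[R] ((Σ i, monomialsLT σ (m i)) → R) :=
  LinearMap.pi fun x => lcoeff R x.2.1 ∘ₗ (mvTaylor (A x.1)).toLinearMap

theorem taylorJet_apply (m : ι → ℕ) (A : ι → σ → R) (p : MvPolynomial σ R)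
    (x : Σ i, monomialsLT σ (m i)) :
    taylorJet m A p x = coeff x.2.1 (mvTaylor (A x.1) p) :=
  rfl

theorem taylorJet_eq_zero_iff {m : ι → ℕ} {A : ι → σ → R} {p : MvPolynomial σ R} :
    taylorJet m A p = 0 ↔ ∀ i, m i ≤ vanishingOrder (A i) p := by
  simp only [le_vanishingOrder_iff, funext_iff, taylorJet_apply, Pi.zero_apply, Sigma.forall,
    Subtype.forall, mem_monomialsLT]

theorem TaylorSolvable.surjective_taylorJet {n : ℕ} {m : ι → ℕ} {A : ι → σ → R}
    (h : TaylorSolvable n m A) :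
    Function.Surjective ((taylorJet m A).domRestrict (restrictTotalDegree σ R n)) := by
  classical
  intro g
  obtain ⟨p, hp, hpc⟩ := h fun i α => if hα : α ∈ monomialsLT σ (m i) then g ⟨i, α, hα⟩ else 0
  refine ⟨⟨p, (mem_restrictTotalDegree _ _ _).2 hp⟩, funext fun ⟨i, α, hα⟩ => ?_⟩
  rw [LinearMap.domRestrict_apply, taylorJet_apply, hpc i α (mem_monomialsLT.1 hα), dif_pos hα]

end Jets

section Interpolation

variable {σ K ι : Type*} [Fintype σ] [Field K] [Fintype ι]

theorem TaylorSolvable.choose_add_sum_card_le {n : ℕ} {m : ι → ℕ} {A : ι → σ → K}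
    (hsolv : TaylorSolvable n m A) {f : MvPolynomial σ K} (hf : f ≠ 0)
    (hdeg : f.totalDegree ≤ n) (hA : ∀ i, eval (A i) f = 0) :
    (n - f.totalDegree + Fintype.card σ).choose (Fintype.card σ)
        + ∑ i, (monomialsLT σ (m i)).card ≤
      (n + Fintype.card σ).choose (Fintype.card σ)
        + ∑ i, (monomialsLT σ (m i - 1)).card := by
  set k := f.totalDegree
  have mul_mem : ∀ q ∈ restrictTotalDegree σ K (n - k),
      LinearMap.mulLeft K f q ∈ restrictTotalDegree σ K n := fun q hq => by
    rw [mem_restrictTotalDegree] at hq ⊢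
    exact (totalDegree_mul f q).trans (by lia)
  have mul_injective : Function.Injective ((LinearMap.mulLeft K f).restrict mul_mem) :=
    fun p q h => Subtype.ext (mul_right_injective₀ hf (congrArg Subtype.val h))
  have mul_ker : (LinearMap.ker ((taylorJet (m · - 1) A).domRestrict
        (restrictTotalDegree σ K (n - k)))).map ((LinearMap.mulLeft K f).restrict mul_mem) ≤
      LinearMap.ker ((taylorJet m A).domRestrict (restrictTotalDegree σ K n)) := by
    rw [Submodule.map_le_iff_le_comap]
    intro q hq
    simp only [Submodule.mem_comap, LinearMap.mem_ker, LinearMap.domRestrict_apply,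
      taylorJet_eq_zero_iff] at hq ⊢
    intro i
    calc (m i : ℕ∞) ≤ 1 + (m i - 1 : ℕ) := by norm_cast; lia
      _ ≤ vanishingOrder (A i) f + vanishingOrder (A i) q :=
        add_le_add (one_le_vanishingOrder_iff.2 (hA i)) (hq i)
      _ ≤ vanishingOrder (A i) (f * q) := add_vanishingOrder_le_vanishingOrder_mul _ _ _
  simpa only [finrank_restrictTotalDegree, Module.finrank_fintype_fun_eq_card, Fintype.card_sigma,
    Fintype.card_coe] using
    finrank_add_finrank_le_of_map_ker_le hsolv.surjective_taylorJet mul_injective mul_ker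

open scoped Classical in
theorem stmt_3_general {n : ℕ} {m : ι → ℕ} (hm : ∀ i, 1 ≤ m i) {A : ι → σ → K}
    (hsolv : TaylorSolvable n m A) {f : MvPolynomial σ K} (hf : f ≠ 0)
    (hdeg : f.totalDegree ≤ n) :
    (n - f.totalDegree + Fintype.card σ).choose (Fintype.card σ)
        + ∑ i with eval (A i) f = 0, (Fintype.card σ).multichoose (m i - 1) ≤
      (n + Fintype.card σ).choose (Fintype.card σ) := by
  have count := (hsolv.comp_injective
    (Subtype.val_injective (p := fun i => eval (A i) f = 0))).choose_add_sum_card_le hf hdeg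
      Subtype.prop
  have card_eq (i : ι) : (monomialsLT σ (m i)).card =
      (monomialsLT σ (m i - 1)).card + (Fintype.card σ).multichoose (m i - 1) := by
    rw [← card_monomialsLT_succ, Nat.sub_add_cancel (hm i)]
  simp only [Function.comp_apply, card_eq, Finset.sum_add_distrib] at count
  rw [← Finset.sum_subtype_eq_sum_filter, Finset.subtype_univ]
  lia

end Interpolation

section Plane

theorem eval_Dij (a : Fin 2 → ℝ) (i j : ℕ) (p : MvPolynomial (Fin 2) ℝ) :
    eval a (Dij i j p) = i.factorial * j.factorial *
      coeff (Finsupp.single 0 i + Finsupp.single 1 j) (mvTaylor a p) := by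
  rw [← coeff_zero_mvTaylor, Dij, mvTaylor_iterate_pderiv, mvTaylor_iterate_pderiv,
    coeff_iterate_pderiv, coeff_iterate_pderiv]
  simp only [zero_add, ne_eq, one_ne_zero, not_false_eq_true, Finsupp.single_eq_of_ne,
    Nat.one_ascFactorial, Finsupp.coe_zero, Pi.zero_apply]
  ring

theorem HermiteSolvable.taylorSolvable {n s : ℕ} {m : Fin s → ℕ} {A : Fin s → Fin 2 → ℝ}
    (h : HermiteSolvable n s m A) : TaylorSolvable n m A := fun c => by
  obtain ⟨p, hp, hpc⟩ := h fun k i j =>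
    i.factorial * j.factorial * c k (Finsupp.single 0 i + Finsupp.single 1 j)
  refine ⟨p, hp, fun k α hα => ?_⟩
  have α_eq : Finsupp.single 0 (α 0) + Finsupp.single 1 (α 1) = α := by
    ext t
    fin_cases t <;> simp
  have deg : α 0 + α 1 + 1 ≤ m k := by
    rwa [Finsupp.degree_eq_sum, Fin.sum_univ_two] at hα
  have key := hpc k (α 0) (α 1) deg
  rw [eval_Dij, α_eq] at key
  exact mul_left_cancel₀ (by positivity) key

theorem add_two_choose_two_eq {n k : ℕ} (hk : k ≤ n) :
    (n + 2).choose 2 = (n - k + 2).choose 2 + k * (2 * n + 3 - k) / 2 := by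
  obtain ⟨l, rfl⟩ := Nat.exists_eq_add_of_le hk
  have choose_two_mul_two (a : ℕ) : (a + 2).choose 2 * 2 = (a + 2) * (a + 1) := by
    rw [← Nat.add_one_mul_choose_eq, Nat.choose_one_right]
  have key : (k + l + 2).choose 2 * 2 = (l + 2).choose 2 * 2 + k * (k + 2 * l + 3) := by
    rw [choose_two_mul_two, choose_two_mul_two]
    ring
  rw [show 2 * (k + l) + 3 - k = k + 2 * l + 3 by lia, Nat.add_sub_cancel_left]
  lia

open scoped Classical in
theorem TaylorSolvable.sum_multiplicity_le {K ι : Type*} [Field K] [Fintype ι] {n : ℕ} {m : ι → ℕ}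
    (hm : ∀ i, 1 ≤ m i) {A : ι → Fin 2 → K} (hsolv : TaylorSolvable n m A)
    {f : MvPolynomial (Fin 2) K} (hf : f ≠ 0) (hdeg : f.totalDegree ≤ n) :
    ∑ i with eval (A i) f = 0, m i ≤ f.totalDegree * (2 * n + 3 - f.totalDegree) / 2 := by
  have bound := stmt_3_general hm hsolv hf hdeg
  have multichoose_eq (i : ι) : Nat.multichoose 2 (m i - 1) = m i := by
    rw [Nat.multichoose_two, Nat.sub_add_cancel (hm i)]
  simp only [Fintype.card_fin, multichoose_eq] at bound
  rw [add_two_choose_two_eq hdeg] at bound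
  lia

end Plane

open scoped Classical in
theorem stmt_3 (n s : ℕ) (nk : Fin s → ℕ) (hnk : ∀ k, 1 ≤ nk k)
    (A : Fin s → Fin 2 → ℝ) (hA : Function.Injective A)
    (hsolv : HermiteSolvable n s nk A) :
    ∀ (f : MvPolynomial (Fin 2) ℝ) (k : ℕ), f ≠ 0 → 1 ≤ k → k ≤ n →
      f.totalDegree = k →
      ∑ i ∈ Finset.univ.filter fun i => eval (A i) f = 0, nk i ≤
        k * (2 * n + 3 - k) / 2 := by
  rintro f k hf - hkn rfl
  exact hsolv.taylorSolvable.sum_multiplicity_le hnk hf hkn
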